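/- Let φ: (0,1) → ℝ be differentiable and assume the Löwner representation hypothesis: a ∈ ℝ, b ≥ 0, and μ is a Borel probability measure on [−1,1] such that φ'(x) = a + b ∫_{[−1,1]} (2x−1)/(1−λ(2x−1)) dμ(λ) for every x ∈ (0,1). Define g: [−1,1] × (0,1) → ℝ by g(λ,x) = (2x−1)/λ + ln(1+λ(1−2x))/λ² for λ ≠ 0 and g(0,x) = −(1−2x)²/2. Then there exists c ∈ ℝ such that for every x ∈ (0,1): φ(x) = a·x + c − (b/2) ∫_{[−1,1]} g(λ,x) dμ(λ), the integrand being bounded and continuous in λ for each fixed x ∈ (0,1). -/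

import Mathlib

/-!
With `t = 2x - 1`, the integrand satisfies `∂ₓ g(λ,x) = -2t / (1 - λt)` for every `λ ∈ [-1,1]`,
including the removable singularity `λ = 0`. On `|t| ≤ r < 1` this derivative is bounded by
`2 / (1 - r)` uniformly in `λ`, so one may differentiate under the integral sign
(`hasDerivAt_integral_loewner`), and `φ(x) - a x + (b/2) ∫ g(λ,x) dμ(λ)` has zero derivative on the
interval `(0,1)`, hence is constant. Continuity of `g(·,x)` at `λ = 0` comes from the
second-order Taylor estimate `|log (1 - z) + z + z²/2| ≤ |z|³ / (1 - |z|)` at `z = λt`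
(`continuousOn_loewner`); boundedness and integrability follow by compactness of `[-1,1]`.
-/

open MeasureTheory

/-- The integrand `g(λ,x) = (2x−1)/λ + ln(1+λ(1−2x))/λ²` for `λ ≠ 0`, extended by its limit
`g(0,x) = −(1−2x)²/2` at `λ = 0`. -/
noncomputable def loewnerPrimitiveIntegrand (l x : ℝ) : ℝ :=
  if l = 0 then -(1 - 2*x)^2 / 2
  else (2*x - 1) / l + Real.log (1 + l*(1 - 2*x)) / l^2

lemma loewner_abs_lt {x : ℝ} (hx : x ∈ Set.Ioo (0:ℝ) 1) : |2*x - 1| < 1 := by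
  rw [abs_lt]; constructor <;> linarith [hx.1, hx.2]

lemma loewner_denom_lower {l t r : ℝ} (hl : l ∈ Set.Icc (-1:ℝ) 1) (ht : |t| ≤ r) :
    1 - r ≤ 1 - l*t := by
  have h1 : |l| ≤ 1 := abs_le.2 hl
  have h2 : l * t ≤ |l| * |t| := by rw [← abs_mul]; exact le_abs_self _
  nlinarith [abs_nonneg l, abs_nonneg t]

lemma loewner_denom_pos {l x : ℝ} (hl : l ∈ Set.Icc (-1:ℝ) 1) (hx : x ∈ Set.Ioo (0:ℝ) 1) :
    0 < 1 - l*(2*x - 1) := by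
  have := loewner_denom_lower hl (le_refl |2*x - 1|)
  linarith [loewner_abs_lt hx]

/-- The pointwise `x`-derivative of the integrand; the formula is uniform in `l`, the value
`g(0,x)` being the primitive that the formula requires at `l = 0`. -/
lemma hasDerivAt_loewner {l x : ℝ} (hl : l ∈ Set.Icc (-1:ℝ) 1) (hx : x ∈ Set.Ioo (0:ℝ) 1) :
    HasDerivAt (fun y => loewnerPrimitiveIntegrand l y)
      (-2 * ((2*x - 1) / (1 - l*(2*x - 1)))) x := by
  have hd := loewner_denom_pos hl hx
  have hlin : HasDerivAt (fun y : ℝ => 2*y) 2 x := by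
    simpa using (hasDerivAt_id x).const_mul (2:ℝ)
  by_cases h0 : l = 0
  · subst h0
    simp only [loewnerPrimitiveIntegrand, if_true]
    refine (((hlin.const_sub 1).pow 2).neg.div_const 2).congr_deriv ?_
    norm_num
    ring
  · simp only [loewnerPrimitiveIntegrand, if_neg h0]
    have hne : 1 + l*(1 - 2*x) ≠ 0 := by
      have : 1 + l*(1 - 2*x) = 1 - l*(2*x - 1) := by ring
      rw [this]; exact hd.ne'
    have h := ((hlin.sub_const 1).div_const l).add
      (((((hlin.const_sub 1).const_mul l).const_add 1).log hne).div_const (l^2))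
    refine h.congr_deriv ?_
    have : 1 - l*(2*x - 1) = 1 + l*(1 - 2*x) := by ring
    rw [this]
    field_simp
    ring

/-- The quantitative form of continuity at the removable singularity `l = 0`. -/
lemma loewner_sub_zero_le {l x : ℝ} (hl : l ∈ Set.Icc (-1:ℝ) 1) (hx : x ∈ Set.Ioo (0:ℝ) 1) :
    |loewnerPrimitiveIntegrand l x - loewnerPrimitiveIntegrand 0 x|
      ≤ |l| * (1 / (1 - |2*x - 1|)) := by
  have ht := loewner_abs_lt hx
  by_cases h0 : l = 0
  · simp [h0]
  have hl1 : |l| ≤ 1 := abs_le.2 hl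
  have hlpos : 0 < |l| := abs_pos.2 h0
  have htn := abs_nonneg (2*x - 1)
  have hz : |l*(2*x - 1)| ≤ |2*x - 1| := by
    rw [abs_mul]; nlinarith
  have key := Real.abs_log_sub_add_sum_range_le (lt_of_le_of_lt hz ht) 2
  simp only [Finset.sum_range_succ, Finset.sum_range_zero] at key
  norm_num at key
  have e : loewnerPrimitiveIntegrand l x - loewnerPrimitiveIntegrand 0 x
      = (l*(2*x - 1) + (l*(2*x - 1))^2/2 + Real.log (1 - l*(2*x - 1))) / l^2 := by
    have : 1 + l*(1 - 2*x) = 1 - l*(2*x - 1) := by ring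
    simp only [loewnerPrimitiveIntegrand, if_neg h0, if_true, this]
    field_simp
    ring
  rw [e, abs_div, abs_of_nonneg (sq_nonneg l), div_le_iff₀ (by positivity)]
  have hcube : (|l| * |2*x - 1|)^3 ≤ |l|^3 := by
    apply pow_le_pow_left₀ (by positivity)
    nlinarith
  calc _ ≤ (|l| * |2*x - 1|)^3 / (1 - |l| * |2*x - 1|) := key
    _ ≤ |l|^3 / (1 - |2*x - 1|) := by
      apply div_le_div₀ (by positivity) hcube (by linarith)
      rw [abs_mul] at hz; linarith
    _ = |l| * (1 / (1 - |2*x - 1|)) * l^2 := by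
      rw [← sq_abs l]; ring

lemma continuousOn_loewner {x : ℝ} (hx : x ∈ Set.Ioo (0:ℝ) 1) :
    ContinuousOn (fun l => loewnerPrimitiveIntegrand l x) (Set.Icc (-1:ℝ) 1) := by
  intro l hl
  by_cases h0 : l = 0
  · subst h0
    rw [ContinuousWithinAt, tendsto_iff_dist_tendsto_zero]
    have hlim : Filter.Tendsto (fun l : ℝ => |l| * (1 / (1 - |2*x - 1|)))
        (nhdsWithin 0 (Set.Icc (-1:ℝ) 1)) (nhds 0) := by
      have : Continuous (fun l : ℝ => |l| * (1 / (1 - |2*x - 1|))) := by fun_prop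
      simpa using (this.tendsto 0).mono_left nhdsWithin_le_nhds
    refine squeeze_zero' (Filter.Eventually.of_forall fun _ => dist_nonneg) ?_ hlim
    filter_upwards [self_mem_nhdsWithin] with l hl
    exact loewner_sub_zero_le hl hx
  · apply ContinuousAt.continuousWithinAt
    have hne : 1 + l*(1 - 2*x) ≠ 0 := by
      have := loewner_denom_pos hl hx
      nlinarith
    have hc : ContinuousAt
        (fun l : ℝ => (2*x - 1) / l + Real.log (1 + l*(1 - 2*x)) / l^2) l := by
      have h2 : l^2 ≠ 0 := pow_ne_zero 2 h0
      fun_prop (disch := assumption)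
    refine hc.congr ?_
    filter_upwards [isOpen_ne.mem_nhds h0] with y hy
    simp [loewnerPrimitiveIntegrand, show y ≠ 0 from hy]

/-- Differentiation under the integral sign. -/
lemma hasDerivAt_integral_loewner (μ : Measure ℝ) [IsProbabilityMeasure μ] {x : ℝ}
    (hx : x ∈ Set.Ioo (0:ℝ) 1) :
    HasDerivAt (fun y => ∫ l in Set.Icc (-1:ℝ) 1, loewnerPrimitiveIntegrand l y ∂μ)
      (∫ l in Set.Icc (-1:ℝ) 1, -2 * ((2*x - 1) / (1 - l*(2*x - 1))) ∂μ) x := by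
  have ht := loewner_abs_lt hx
  -- a radius strictly between `|2x - 1|` and `1`, so that `|2y - 1| < r` is a neighbourhood of `x`
  obtain ⟨r, hr, hr1⟩ := exists_between ht
  have hopen : IsOpen {y : ℝ | |2*y - 1| < r} := isOpen_lt (by fun_prop) continuous_const
  have hsub : ∀ y ∈ {y : ℝ | |2*y - 1| < r}, y ∈ Set.Ioo (0:ℝ) 1 := by
    intro y hy
    have := abs_lt.1 (show |2*y - 1| < r from hy)
    constructor <;> linarith
  have hmem : ∀ᵐ l ∂(μ.restrict (Set.Icc (-1:ℝ) 1)), l ∈ Set.Icc (-1:ℝ) 1 :=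
    ae_restrict_mem measurableSet_Icc
  refine (hasDerivAt_integral_of_dominated_loc_of_deriv_le
    (F := fun y l => loewnerPrimitiveIntegrand l y)
    (F' := fun y l => -2 * ((2*y - 1) / (1 - l*(2*y - 1))))
    (bound := fun _ => 2 / (1 - r)) (hopen.mem_nhds hr) ?_ ?_ ?_ ?_ ?_ ?_).2
  · filter_upwards [hopen.mem_nhds hr] with y hy
    exact (continuousOn_loewner (hsub y hy)).aestronglyMeasurable measurableSet_Icc
  · exact (continuousOn_loewner hx).integrableOn_compact isCompact_Icc
  · exact Measurable.aestronglyMeasurable (by fun_prop)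
  · filter_upwards [hmem] with l hl y hy
    have hy' : |2*y - 1| < r := hy
    have h1 := loewner_denom_lower hl hy'.le
    have h2 : 0 < 1 - r := by linarith
    rw [Real.norm_eq_abs, abs_mul, abs_div, abs_of_pos (h2.trans_le h1), ← mul_div_assoc]
    apply div_le_div₀ (by norm_num) _ h2 h1
    norm_num
    linarith
  · exact integrable_const _
  · filter_upwards [hmem] with l hl y hy
    exact hasDerivAt_loewner hl (hsub y hy)

/-- If `φ` is differentiable on `(0,1)` with derivative `φ'` admitting a Löwner representation
`φ'(x) = a + b ∫ (2x−1)/(1−λ(2x−1)) dμ(λ)` (with `b ≥ 0` and `μ` a Borel probability measure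
on `[−1,1]`), then there is `c ∈ ℝ` such that for every `x ∈ (0,1)`,
`φ(x) = a·x + c − (b/2) ∫ g(λ,x) dμ(λ)`, the integrand `λ ↦ g(λ,x)` being bounded and
continuous on `[−1,1]` for each fixed `x ∈ (0,1)`. -/
theorem primitive_eq_of_loewner_rep
    (φ φ' : ℝ → ℝ) (a b : ℝ) (μ : Measure ℝ) [IsProbabilityMeasure μ]
    (hφd : ∀ x ∈ Set.Ioo (0:ℝ) 1, HasDerivAt φ (φ' x) x)
    (hb : 0 ≤ b)
    (hμsupp : μ (Set.Icc (-1:ℝ) 1)ᶜ = 0)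
    (hrep : ∀ x ∈ Set.Ioo (0:ℝ) 1,
      φ' x = a + b * ∫ l in Set.Icc (-1:ℝ) 1, (2*x - 1) / (1 - l*(2*x - 1)) ∂μ) :
    ∃ c : ℝ, ∀ x ∈ Set.Ioo (0:ℝ) 1,
      φ x = a * x + c
        - (b/2) * ∫ l in Set.Icc (-1:ℝ) 1, loewnerPrimitiveIntegrand l x ∂μ ∧
      ContinuousOn (fun l => loewnerPrimitiveIntegrand l x) (Set.Icc (-1:ℝ) 1) ∧
      ∃ C : ℝ, ∀ l ∈ Set.Icc (-1:ℝ) 1, |loewnerPrimitiveIntegrand l x| ≤ C := by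
  set H : ℝ → ℝ := fun y => φ y - a * y
    + (b/2) * ∫ l in Set.Icc (-1:ℝ) 1, loewnerPrimitiveIntegrand l y ∂μ with hH
  have hderiv : ∀ y ∈ Set.Ioo (0:ℝ) 1, HasDerivAt H 0 y := by
    intro y hy
    have h := ((hφd y hy).sub ((hasDerivAt_id y).const_mul a)).add
      ((hasDerivAt_integral_loewner μ hy).const_mul (b/2))
    refine h.congr_deriv ?_
    rw [hrep y hy, integral_const_mul]
    ring
  obtain ⟨c, hc⟩ := isOpen_Ioo.exists_is_const_of_deriv_eq_zero isPreconnected_Ioo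
    (fun y hy => (hderiv y hy).differentiableAt.differentiableWithinAt)
    (fun y hy => (hderiv y hy).deriv)
  refine ⟨c, fun x hx => ⟨?_, continuousOn_loewner hx, ?_⟩⟩
  · have := hc x hx
    simp only [hH] at this
    linarith
  · exact isCompact_Icc.exists_bound_of_continuousOn (continuousOn_loewner hx)
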